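/- arXiv:math/0208219 — 5 statements merged into one kernel-verified Lean document; each statement's English description precedes it below -/
import Mathlib

section
/- If the stratum S_v is nonempty, then S_v, with its subspace topology from ℝ^n, is contractible. -/
open Polynomial

/-- The monic polynomial `P_a(x) = x^n + a_1 x^{n-1} + … + a_n`. -/
noncomputable def Ppoly (n : ℕ) (a : Fin n → ℝ) : Polynomial ℝ :=
  X ^ n + ∑ i : Fin n, C (a i) * X ^ (n - 1 - (i : ℕ))

/-- The multiplicity vector of `P_a`: the multiplicities of the distinct real
roots of `P_a`, listed in increasing order of the roots. -/
noncomputable def MV (n : ℕ) (a : Fin n → ℝ) : List ℕ :=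
  ((Ppoly n a).roots.toFinset.sort (· ≤ ·)).map fun x => (Ppoly n a).rootMultiplicity x

/-- The stratum of `ℝ^n` associated with a multiplicity vector `v`. -/
def Stratum (n : ℕ) (v : List ℕ) : Set (Fin n → ℝ) := {a | MV n a = v}


namespace StrAux

lemma low_deg (n : ℕ) (hn : 1 ≤ n) (a : Fin n → ℝ) :
    (∑ i : Fin n, C (a i) * X ^ (n - 1 - (i : ℕ)) : ℝ[X]).degree < (n : ℕ) := by
  refine lt_of_le_of_lt (degree_sum_le _ _) ?_
  refine (Finset.sup_lt_iff (WithBot.bot_lt_coe n)).2 ?_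
  intro i _
  refine lt_of_le_of_lt (degree_C_mul_X_pow_le _ _) ?_
  exact WithBot.coe_lt_coe.2 (show n - 1 - (i : ℕ) < n by omega)

lemma Ppoly_zero (a : Fin 0 → ℝ) : Ppoly 0 a = 1 := by simp [Ppoly]

lemma Ppoly_monic (n : ℕ) (a : Fin n → ℝ) : (Ppoly n a).Monic := by
  rcases Nat.eq_zero_or_pos n with rfl | h
  · rw [Ppoly_zero]; exact monic_one
  · exact monic_X_pow_add (low_deg n h a)

lemma Ppoly_natDegree (n : ℕ) (a : Fin n → ℝ) : (Ppoly n a).natDegree = n := by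
  rcases Nat.eq_zero_or_pos n with rfl | h
  · rw [Ppoly_zero]; simp
  · unfold Ppoly
    rw [add_comm, natDegree_add_eq_right_of_degree_lt, natDegree_X_pow]
    rw [degree_X_pow]; exact low_deg n h a

lemma Ppoly_coeff (n : ℕ) (a : Fin n → ℝ) (i : Fin n) :
    (Ppoly n a).coeff (n - 1 - (i : ℕ)) = a i := by
  unfold Ppoly
  rw [coeff_add, coeff_X_pow, if_neg (by omega), zero_add, finsetSum_coeff,
    Finset.sum_eq_single i]
  · simp
  · intro j _ hj
    rw [coeff_C_mul, coeff_X_pow, if_neg, mul_zero]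
    intro h
    apply hj
    ext
    omega
  · simp

lemma Ppoly_of_monic (n : ℕ) (P : ℝ[X]) (hP : P.Monic) (hd : P.natDegree = n) :
    Ppoly n (fun i => P.coeff (n - 1 - (i : ℕ))) = P := by
  ext k
  rcases lt_trichotomy k n with h | h | h
  · have := Ppoly_coeff n (fun i => P.coeff (n - 1 - (i : ℕ))) ⟨n - 1 - k, by omega⟩
    simp only [] at this
    rwa [show n - 1 - (n - 1 - k) = k by omega] at this
  · subst h
    have h1 := (Ppoly_monic k (fun i => P.coeff (k - 1 - (i : ℕ)))).coeff_natDegree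
    have h2 := hP.coeff_natDegree
    rw [Ppoly_natDegree] at h1
    rw [hd] at h2
    rw [h1, h2]
  · rw [coeff_eq_zero_of_natDegree_lt, coeff_eq_zero_of_natDegree_lt]
    · omega
    · rw [Ppoly_natDegree]; omega

lemma Ppoly_inj (n : ℕ) (a b : Fin n → ℝ) (h : Ppoly n a = Ppoly n b) : a = b := by
  ext i
  rw [← Ppoly_coeff n a i, h, Ppoly_coeff]

/-- product of root factors -/
noncomputable def Dp (v : List ℕ) (x : Fin v.length → ℝ) : ℝ[X] :=
  ∏ i, (X - C (x i)) ^ v.get i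

lemma Dp_monic (v : List ℕ) (x : Fin v.length → ℝ) : (Dp v x).Monic :=
  monic_prod_of_monic _ _ fun i _ => (monic_X_sub_C _).pow _

lemma sum_get (v : List ℕ) : ∑ i, v.get i = v.sum := by
  rw [← List.sum_ofFn, List.ofFn_get]

lemma Dp_natDegree (v : List ℕ) (x : Fin v.length → ℝ) : (Dp v x).natDegree = v.sum := by
  unfold Dp
  rw [natDegree_prod_of_monic _ _ fun i _ => (monic_X_sub_C _).pow _, ← sum_get]
  refine Finset.sum_congr rfl fun i _ => ?_
  rw [(monic_X_sub_C _).natDegree_pow, natDegree_X_sub_C, mul_one]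

lemma Dp_roots (v : List ℕ) (x : Fin v.length → ℝ) :
    (Dp v x).roots = ∑ i, v.get i • ({x i} : Multiset ℝ) := by
  unfold Dp
  rw [roots_prod _ _ (Dp_monic v x).ne_zero]
  simp only [roots_pow, roots_X_sub_C]
  rfl

/-- parametrisation -/
noncomputable def F (n d : ℕ) (v : List ℕ) (z : (Fin v.length → ℝ) × (Fin d → ℝ)) : Fin n → ℝ :=
  fun i => (Dp v z.1 * Ppoly d z.2).coeff (n - 1 - (i : ℕ))

lemma Ppoly_F (n d : ℕ) (v : List ℕ) (h : v.sum + d = n)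
    (z : (Fin v.length → ℝ) × (Fin d → ℝ)) :
    Ppoly n (F n d v z) = Dp v z.1 * Ppoly d z.2 := by
  apply Ppoly_of_monic
  · exact (Dp_monic _ _).mul (Ppoly_monic _ _)
  · rw [(Dp_monic _ _).natDegree_mul (Ppoly_monic _ _), Dp_natDegree, Ppoly_natDegree, h]

lemma roots_F (d : ℕ) (v : List ℕ) (x : Fin v.length → ℝ) (b : Fin d → ℝ) :
    (Dp v x * Ppoly d b).roots = ∑ i, v.get i • ({x i} : Multiset ℝ) + (Ppoly d b).roots := by
  rw [roots_mul ((Dp_monic _ _).mul (Ppoly_monic _ _)).ne_zero, Dp_roots]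

/-- coefficientwise continuity -/
def CC {E : Type*} [TopologicalSpace E] (g : E → ℝ[X]) : Prop :=
  ∀ k, Continuous fun z => (g z).coeff k

section
variable {E : Type*} [TopologicalSpace E]

lemma CC.mul {g h : E → ℝ[X]} (hg : CC g) (hh : CC h) : CC fun z => g z * h z := by
  intro k
  simp only [coeff_mul]
  exact continuous_finsetSum _ fun i _ => (hg _).mul (hh _)

lemma CC.add {g h : E → ℝ[X]} (hg : CC g) (hh : CC h) : CC fun z => g z + h z := by
  intro k
  simp only [coeff_add]
  exact (hg _).add (hh _)

lemma CC.const (p : ℝ[X]) : CC fun _ : E => p := fun _ => continuous_const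

lemma CC.pow {g : E → ℝ[X]} (hg : CC g) (m : ℕ) : CC fun z => g z ^ m := by
  induction m with
  | zero => simpa using CC.const 1
  | succ m ih => simpa only [pow_succ] using ih.mul hg

lemma CC.prod {ι : Type*} (s : Finset ι) {g : ι → E → ℝ[X]} (hg : ∀ i, CC (g i)) :
    CC fun z => ∏ i ∈ s, g i z := by
  classical
  induction s using Finset.induction_on with
  | empty => simpa using CC.const 1
  | insert i s hi ih => simpa only [Finset.prod_insert hi] using (hg i).mul ih

lemma CC.sum {ι : Type*} (s : Finset ι) {g : ι → E → ℝ[X]} (hg : ∀ i, CC (g i)) :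
    CC fun z => ∑ i ∈ s, g i z := by
  intro k
  simp only [finsetSum_coeff]
  exact continuous_finsetSum _ fun i _ => hg i k

lemma CC.C {g : E → ℝ} (hg : Continuous g) : CC fun z => C (g z) := by
  intro k
  simp only [coeff_C]
  split_ifs
  · exact hg
  · exact continuous_const
end

lemma F_cont (n d : ℕ) (v : List ℕ) : Continuous (F n d v) := by
  have : CC (fun z : (Fin v.length → ℝ) × (Fin d → ℝ) => Dp v z.1 * Ppoly d z.2) := by
    apply CC.mul
    · unfold Dp
      apply CC.prod
      intro i
      apply CC.pow
      have : CC (fun z : (Fin v.length → ℝ) × (Fin d → ℝ) => (X : ℝ[X]) + Polynomial.C (- z.1 i)) :=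
        (CC.const X).add (CC.C (by fun_prop))
      simpa [sub_eq_add_neg] using this
    · unfold Ppoly
      exact (CC.const _).add (CC.sum _ fun i => (CC.C (by fun_prop)).mul (CC.const _))
  exact continuous_pi fun i => this _

lemma root_bound (n : ℕ) (a : Fin n → ℝ) (R : ℝ) (hR : 0 ≤ R) (ha : ∀ i, |a i| ≤ R) (t : ℂ)
    (ht : ((Ppoly n a).map (algebraMap ℝ ℂ)).IsRoot t) : ‖t‖ ≤ R + 1 := by
  have hm : ((Ppoly n a).map (algebraMap ℝ ℂ)).Monic := (Ppoly_monic n a).map _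
  have h := (IsRoot.norm_lt_cauchyBound hm.ne_zero ht).le
  lift R to NNReal using hR
  have h2 : cauchyBound ((Ppoly n a).map (algebraMap ℝ ℂ)) ≤ R + 1 := by
    unfold cauchyBound
    rw [hm.leadingCoeff, nnnorm_one, div_one]
    refine add_le_add_left ?_ 1
    apply Finset.sup_le
    intro k hk
    rw [Finset.mem_range, (Ppoly_monic n a).natDegree_map, Ppoly_natDegree] at hk
    have := Ppoly_coeff n a ⟨n - 1 - k, by omega⟩
    simp only [] at this
    rw [show n - 1 - (n - 1 - k) = k by omega] at this
    rw [coeff_map, this]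
    rw [← NNReal.coe_le_coe]
    simpa using ha _
  have := h.trans h2
  rw [← NNReal.coe_le_coe] at this
  simpa using this

lemma F_proper (n d : ℕ) (v : List ℕ) (h : v.sum + d = n) (hv : ∀ m ∈ v, 0 < m) :
    IsProperMap (F n d v) := by
  rw [isProperMap_iff_isCompact_preimage]
  refine ⟨F_cont n d v, fun K hK => ?_⟩
  apply Metric.isCompact_of_isClosed_isBounded (hK.isClosed.preimage (F_cont n d v))
  obtain ⟨R, hR0, hR⟩ := hK.isBounded.exists_pos_norm_le
  rw [isBounded_iff_forall_norm_le]
  refine ⟨max (R + 1) (max (R + 1) 1 ^ d * d.choose (d / 2)), ?_⟩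
  rintro ⟨x, b⟩ hz
  have ha : ∀ i, |F n d v (x, b) i| ≤ R := fun i => (norm_le_pi_norm _ i).trans (hR _ hz)
  have hb := root_bound n _ R hR0.le ha
  rw [Ppoly_F n d v h] at hb
  simp only [Polynomial.map_mul, IsRoot.def, eval_mul, mul_eq_zero] at hb
  apply norm_prod_le_iff.2 ⟨_, _⟩
  · refine (pi_norm_le_iff_of_nonneg (by positivity)).2 fun i => le_trans ?_ (le_max_left _ _)
    have := hb (x i) (Or.inl ?_)
    · simpa using this
    · have h0 : (Dp v x).eval (x i) = 0 := by
        unfold Dp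
        rw [eval_prod]
        apply Finset.prod_eq_zero (Finset.mem_univ i)
        have := hv (v.get i) (List.get_mem _ _)
        simp [-List.get_eq_getElem, this.ne']
      have h1 := aeval_algebraMap_apply ℂ (x i) (Dp v x)
      rw [eval_map_algebraMap]
      simpa [h0] using h1
  · refine (pi_norm_le_iff_of_nonneg (by positivity)).2 fun i => le_trans ?_ (le_max_right _ _)
    have := coeff_bdd_of_roots_le (B := R + 1) (d := d) (algebraMap ℝ ℂ) (Ppoly_monic d b)
      (IsAlgClosed.splits _) (Ppoly_natDegree d b).le
      (fun z hz => hb z (Or.inr (isRoot_of_mem_roots hz))) (d - 1 - i)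
    rw [coeff_map, Ppoly_coeff] at this
    simpa using this

lemma pos_of_no_roots (Q : ℝ[X]) (hQ : Q.Monic) (h : Q.roots = 0) (t : ℝ) : 0 < Q.eval t := by
  by_contra! hc
  have hpos : ∃ s, 0 ≤ Q.eval s := by
    by_cases hd : 0 < Q.degree
    · have := Q.tendsto_atTop_of_leadingCoeff_nonneg hd (by rw [hQ.leadingCoeff]; norm_num)
      exact (this.eventually (Filter.eventually_ge_atTop 0)).exists
    · rw [hQ.degree_le_zero_iff_eq_one.1 (not_lt.1 hd)]
      simp
  obtain ⟨s, hs⟩ := mem_range_of_exists_le_of_exists_ge Q.continuous ⟨t, hc⟩ hpos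
  have : s ∈ Q.roots := (mem_roots hQ.ne_zero).2 hs
  simp [h] at this

lemma roots_zero_of_pos (Q : ℝ[X]) (h : ∀ t, 0 < Q.eval t) : Q.roots = 0 := by
  apply Multiset.eq_zero_of_forall_notMem
  intro t ht
  have h1 := isRoot_of_mem_roots ht
  have h2 := h t
  rw [IsRoot.def] at h1
  linarith

lemma MV_sum (n : ℕ) (a : Fin n → ℝ) : (MV n a).sum = Multiset.card (Ppoly n a).roots := by
  rw [← Multiset.toFinset_sum_count_eq]
  unfold MV
  rw [← Multiset.sum_coe, ← Multiset.map_coe, Finset.sort_eq]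
  simp only [count_roots]
  rfl

lemma MV_length (n : ℕ) (a : Fin n → ℝ) :
    (MV n a).length = (Ppoly n a).roots.toFinset.card := by
  simp [MV]

lemma mem_sum_roots (v : List ℕ) (hv : ∀ m ∈ v, 0 < m) (x : Fin v.length → ℝ) (t : ℝ) :
    t ∈ ∑ i, v.get i • ({x i} : Multiset ℝ) ↔ ∃ i, x i = t := by
  rw [Multiset.mem_sum]
  constructor
  · rintro ⟨i, -, hi⟩
    exact ⟨i, (Multiset.mem_singleton.1 (Multiset.mem_of_mem_nsmul hi)).symm⟩
  · rintro ⟨i, rfl⟩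
    refine ⟨i, Finset.mem_univ _, ?_⟩
    rw [Multiset.mem_nsmul]
    exact ⟨(hv _ (List.get_mem _ _)).ne', Multiset.mem_singleton_self _⟩

lemma sort_good (n d : ℕ) (v : List ℕ) (h : v.sum + d = n) (hv : ∀ m ∈ v, 0 < m)
    (x : Fin v.length → ℝ) (b : Fin d → ℝ) (hx : StrictMono x) (hb : (Ppoly d b).roots = 0) :
    (Ppoly n (F n d v (x, b))).roots.toFinset.sort (· ≤ ·) = List.ofFn x := by
  rw [Ppoly_F n d v h, roots_F, hb, add_zero]
  have : (∑ i, v.get i • ({x i} : Multiset ℝ)).toFinset = (List.ofFn x).toFinset := by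
    ext t
    rw [Multiset.mem_toFinset, mem_sum_roots v hv, List.mem_toFinset, List.mem_ofFn]
  rw [this]
  refine (List.toFinset_sort (· ≤ ·) (List.nodup_ofFn.2 hx.injective)).2 ?_
  exact List.pairwise_ofFn.2 fun i j hij => hx.monotone hij.le

lemma MV_good (n d : ℕ) (v : List ℕ) (h : v.sum + d = n) (hv : ∀ m ∈ v, 0 < m)
    (x : Fin v.length → ℝ) (b : Fin d → ℝ) (hx : StrictMono x) (hb : (Ppoly d b).roots = 0) :
    MV n (F n d v (x, b)) = v := by
  unfold MV
  rw [sort_good n d v h hv x b hx hb, List.map_ofFn]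
  conv_rhs => rw [← List.ofFn_get v]
  congr 1
  ext i
  rw [Function.comp, ← count_roots, Ppoly_F n d v h, roots_F, hb, add_zero,
    Multiset.count_sum', Finset.sum_eq_single i]
  · simp
  · intro j _ hj
    rw [Multiset.count_nsmul, Multiset.count_singleton, if_neg, mul_zero]
    exact fun e => hj (hx.injective e.symm)
  · simp

lemma good_of_MV (n d : ℕ) (v : List ℕ) (h : v.sum + d = n) (hv : ∀ m ∈ v, 0 < m)
    (x : Fin v.length → ℝ) (b : Fin d → ℝ) (hx : Monotone x) (hm : MV n (F n d v (x, b)) = v) :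
    StrictMono x ∧ (Ppoly d b).roots = 0 := by
  have h1 := MV_sum n (F n d v (x, b))
  have h2 := MV_length n (F n d v (x, b))
  rw [hm, Ppoly_F n d v h, roots_F] at h1 h2
  have hb : (Ppoly d b).roots = 0 := by
    rw [Multiset.card_add, Multiset.card_sum] at h1
    simp only [Multiset.card_nsmul, Multiset.card_singleton, smul_eq_mul, mul_one] at h1
    rw [sum_get] at h1
    exact Multiset.card_eq_zero.1 (by omega)
  refine ⟨hx.strictMono_of_injective ?_, hb⟩
  rw [hb, add_zero] at h2
  have h3 : (∑ i, v.get i • ({x i} : Multiset ℝ)).toFinset = Finset.univ.image x := by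
    ext t
    rw [Multiset.mem_toFinset, mem_sum_roots v hv]
    simp
  rw [h3] at h2
  have h4 : (Finset.univ.image x).card = (Finset.univ : Finset (Fin v.length)).card := by
    rw [← h2]; simp
  have h5 := Finset.card_image_iff.1 h4
  exact fun i j e => h5 (by simp) (by simp) e

lemma F_surj (n d : ℕ) (v : List ℕ) (h : v.sum + d = n) (a : Fin n → ℝ) (ha : MV n a = v) :
    ∃ x b, StrictMono x ∧ (Ppoly d b).roots = 0 ∧ F n d v (x, b) = a := by
  obtain ⟨Q, hQ, hdeg, hr⟩ := exists_prod_multiset_X_sub_C_mul (Ppoly n a)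
  have hs := MV_sum n a
  rw [ha] at hs
  have hQd : Q.natDegree = d := by
    rw [Ppoly_natDegree] at hdeg; omega
  have hQm : Q.Monic := by
    have hm := Ppoly_monic n a
    rw [← hQ] at hm
    exact (monic_multiset_prod_of_monic _ _ fun i _ => monic_X_sub_C i).of_mul_monic_left hm
  have key : ∃ x : Fin v.length → ℝ, StrictMono x ∧
      ((Ppoly n a).roots.map fun a => X - C a).prod = Dp v x := by
    set L := (Ppoly n a).roots.toFinset.sort (· ≤ ·) with hL
    have hLl : v.length = L.length := by rw [← ha]; simp [MV, hL]
    refine ⟨fun i => L.get (i.cast hLl), ?_, ?_⟩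
    · intro i j hij
      exact (Finset.sortedLT_sort _).strictMono_get (by simpa using hij)
    · have hv : v = L.map fun x => (Ppoly n a).rootMultiplicity x := ha.symm
      rw [Finset.prod_multiset_map_count]
      have e1 : ∏ m ∈ (Ppoly n a).roots.toFinset, (X - C m) ^ (Ppoly n a).roots.count m
          = (L.map fun m => (X - C m) ^ (Ppoly n a).roots.count m).prod := by
        rw [← Multiset.prod_coe, ← Multiset.map_coe, Finset.sort_eq]
        rfl
      rw [e1, Dp, ← List.prod_ofFn]
      congr 1
      apply List.ext_getElem
      · simp [hLl]
      · intro k hk1 hk2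
        simp [hv]
  obtain ⟨x, hx, hxe⟩ := key
  refine ⟨x, fun i => Q.coeff (d - 1 - (i : ℕ)), hx, ?_, ?_⟩
  · rw [Ppoly_of_monic d Q hQm hQd, hr]
  · apply Ppoly_inj n
    rw [Ppoly_F n d v h, Ppoly_of_monic d Q hQm hQd, ← hQ, hxe]

lemma eval_Ppoly (d : ℕ) (b : Fin d → ℝ) (t : ℝ) :
    (Ppoly d b).eval t = t ^ d + ∑ i, b i * t ^ (d - 1 - (i : ℕ)) := by
  simp [Ppoly, eval_finsetSum]

/-- the convex parameter set -/
def KK (d : ℕ) (v : List ℕ) : Set ((Fin v.length → ℝ) × (Fin d → ℝ)) :=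
  {z | StrictMono z.1 ∧ (Ppoly d z.2).roots = 0}

lemma KK_convex (d : ℕ) (v : List ℕ) : Convex ℝ (KK d v) := by
  rintro ⟨x, b⟩ ⟨hx, hb⟩ ⟨y, c⟩ ⟨hy, hc⟩ s t hs ht hst
  simp only at hx hb hy hc
  constructor
  · intro i j hij
    have h1 := hx hij
    have h2 := hy hij
    simp only [Prod.smul_mk, Prod.mk_add_mk, Pi.add_apply, Pi.smul_apply, smul_eq_mul]
    rcases hs.eq_or_lt with rfl | hs
    · have : t = 1 := by linarith
      subst this; simpa using h2
    · have := mul_lt_mul_of_pos_left h1 hs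
      have := mul_le_mul_of_nonneg_left h2.le ht
      linarith
  · apply roots_zero_of_pos
    intro u
    have h1 := pos_of_no_roots _ (Ppoly_monic d b) hb u
    have h2 := pos_of_no_roots _ (Ppoly_monic d c) hc u
    have e : (Ppoly d ((s • (x, b) + t • (y, c)).2)).eval u
        = s * (Ppoly d b).eval u + t * (Ppoly d c).eval u := by
      simp only [eval_Ppoly, Prod.smul_mk, Prod.mk_add_mk, Pi.add_apply, Pi.smul_apply,
        smul_eq_mul, add_mul, Finset.sum_add_distrib, mul_add, Finset.mul_sum, mul_assoc]
      have : u ^ d = s * u ^ d + t * u ^ d := by rw [← add_mul, hst, one_mul]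
      linarith
    rw [e]
    rcases hs.eq_or_lt with rfl | hs
    · have : t = 1 := by linarith
      subst this; simpa using h2
    · have := mul_pos hs h1
      have := mul_nonneg ht h2.le
      linarith

end StrAux

open StrAux

/-- If the stratum `S_v` is nonempty, then `S_v`, with its subspace topology
from `ℝ^n`, is contractible. -/
theorem stratum_contractible (n : ℕ) (hn : 1 ≤ n) (v : List ℕ)
    (hv : ∀ m ∈ v, 0 < m) (hne : (Stratum n v).Nonempty) :
    ContractibleSpace (Stratum n v) := by
  obtain ⟨a₀, ha₀⟩ := hne
  have hle : v.sum ≤ n := by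
    have h1 := MV_sum n a₀
    rw [show MV n a₀ = v from ha₀] at h1
    have h2 := (Ppoly n a₀).card_roots'
    rw [Ppoly_natDegree] at h2
    omega
  obtain ⟨d, h⟩ : ∃ d, v.sum + d = n := ⟨n - v.sum, by omega⟩
  let φ : KK d v → Stratum n v := fun z =>
    ⟨F n d v z.1, MV_good n d v h hv z.1.1 z.1.2 z.2.1 z.2.2⟩
  have hφc : Continuous φ := ((F_cont n d v).comp continuous_subtype_val).subtype_mk _
  have hφs : Function.Surjective φ := by
    rintro ⟨a, ha⟩
    obtain ⟨x, b, hx, hb, e⟩ := F_surj n d v h a ha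
    exact ⟨⟨(x, b), hx, hb⟩, Subtype.ext e⟩
  have hφi : Function.Injective φ := by
    rintro ⟨⟨x, b⟩, hx, hb⟩ ⟨⟨y, c⟩, hy, hc⟩ e
    have e' : F n d v (x, b) = F n d v (y, c) := congrArg Subtype.val e
    have s1 := sort_good n d v h hv x b hx hb
    have s2 := sort_good n d v h hv y c hy hc
    rw [← e', s1] at s2
    have hxy : x = y := List.ofFn_injective s2
    subst hxy
    have p1 := Ppoly_F n d v h (x, b)
    have p2 := Ppoly_F n d v h (x, c)
    rw [← e', p1] at p2
    have := Ppoly_inj _ _ _ (mul_left_cancel₀ (Dp_monic v x).ne_zero p2)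
    subst this
    rfl
  have hmono : IsClosed {z : (Fin v.length → ℝ) × (Fin d → ℝ) | Monotone z.1} := by
    simp only [Monotone, Set.ofPred_forall]
    refine isClosed_iInter fun i => isClosed_iInter fun j => isClosed_iInter fun _ => ?_
    exact isClosed_le (by fun_prop) (by fun_prop)
  have hφcl : IsClosedMap φ := by
    intro S hS
    obtain ⟨T, hT, rfl⟩ := isClosed_induced_iff.1 hS
    have hcl := (F_proper n d v h hv).isClosedMap _ (hT.inter hmono)
    refine isClosed_induced_iff.2 ⟨_, hcl, ?_⟩
    ext ⟨a, ha⟩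
    constructor
    · rintro ⟨⟨x, b⟩, ⟨hz, hm⟩, e⟩
      have e : F n d v (x, b) = a := e
      subst e
      exact ⟨⟨(x, b), good_of_MV n d v h hv x b hm ha⟩, hz, rfl⟩
    · rintro ⟨⟨z, hz⟩, hzT, e⟩
      exact ⟨z, ⟨hzT, hz.1.monotone⟩, congrArg Subtype.val e⟩
  have hK : (KK d v).Nonempty := by
    obtain ⟨z, -⟩ := hφs ⟨a₀, ha₀⟩
    exact ⟨z.1, z.2⟩
  have := (KK_convex d v).contractibleSpace hK
  exact ((Equiv.ofBijective φ ⟨hφi, hφs⟩).toHomeomorphOfContinuousClosed hφc hφcl).symm.contractibleSpace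
end

section
/- Let P, P_1, …, P_m be monic real polynomials with P = P_1 P_2 ⋯ P_m and such that P_i and P_j have no complex root in common for i ≠ j (equivalently, the P_i are pairwise coprime). Identifying the set of monic real polynomials of degree d with ℝ^d via the non-leading coefficients, there exist open neighbourhoods U of P and U_i of P_i (i = 1,…,m) such that the product map U_1 × ⋯ × U_m → U, (Q_1,…,Q_m) ↦ Q_1 Q_2 ⋯ Q_m, is a C-infinity diffeomorphism. -/
open Polynomial

/-- The monic polynomial of degree `d` with non-leading coefficients
`c = (c_1, …, c_d)`: `x^d + c_1 x^{d-1} + … + c_d`. -/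
noncomputable def toPoly (d : ℕ) (c : Fin d → ℝ) : Polynomial ℝ :=
  X ^ d + ∑ j : Fin d, C (c j) * X ^ (d - 1 - (j : ℕ))

/-- The vector of non-leading coefficients `(c_1, …, c_d)` of a monic
polynomial of degree `d`, where `c_j` is the coefficient of `x^{d-j}`. -/
noncomputable def coeffVec (d : ℕ) (P : Polynomial ℝ) : Fin d → ℝ :=
  fun j => P.coeff (d - 1 - (j : ℕ))

noncomputable def lowPoly (d : ℕ) (c : Fin d → ℝ) : Polynomial ℝ :=
  ∑ j : Fin d, C (c j) * X ^ (d - 1 - (j : ℕ))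

lemma lowPoly_coeff (d : ℕ) (c : Fin d → ℝ) (n : ℕ) :
    (lowPoly d c).coeff n = ∑ j : Fin d, c j * (if n = d - 1 - (j : ℕ) then 1 else 0) := by
  simp [lowPoly, coeff_X_pow]

lemma toPoly_eq (d : ℕ) (c : Fin d → ℝ) : toPoly d c = X ^ d + lowPoly d c := rfl

lemma lowPoly_coeff_self (d : ℕ) (c : Fin d → ℝ) (j : Fin d) :
    (lowPoly d c).coeff (d - 1 - (j : ℕ)) = c j := by
  rw [lowPoly_coeff, Finset.sum_eq_single j]
  · simp
  · intro b _ hb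
    have : d - 1 - (j : ℕ) ≠ d - 1 - (b : ℕ) := by
      intro h
      apply hb
      ext
      omega
    simp [this]
  · simp

lemma lowPoly_degree (d : ℕ) (c : Fin d → ℝ) : (lowPoly d c).degree < d := by
  rw [degree_lt_iff_coeff_zero]
  intro n hn
  rw [lowPoly_coeff]
  apply Finset.sum_eq_zero
  intro j _
  have : n ≠ d - 1 - (j : ℕ) := by omega
  simp [this]

lemma toPoly_add_smul (d : ℕ) (c h : Fin d → ℝ) (t : ℝ) :
    toPoly d (c + t • h) = toPoly d c + C t * lowPoly d h := by
  rw [toPoly_eq, toPoly_eq, add_assoc]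
  congr 1
  ext n
  simp only [coeff_add, coeff_C_mul, lowPoly_coeff, Finset.mul_sum, ← Finset.sum_add_distrib]
  refine Finset.sum_congr rfl fun j _ => ?_
  simp only [Pi.add_apply, Pi.smul_apply, smul_eq_mul]
  ring

lemma toPoly_coeffVec (d : ℕ) (P : Polynomial ℝ) (hP : P.Monic) (hd : P.natDegree = d) :
    toPoly d (coeffVec d P) = P := by
  subst hd
  conv_rhs => rw [hP.as_sum]
  rw [← Finset.sum_range_reflect, Finset.sum_range]
  rfl

lemma eq_zero_of_coeffVec (d : ℕ) (Q : Polynomial ℝ) (hQ : Q.degree < d)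
    (h : coeffVec d Q = 0) : Q = 0 := by
  ext n
  rw [coeff_zero]
  by_cases hn : n < d
  · have := congrFun h ⟨d - 1 - n, by omega⟩
    simp only [coeffVec, Pi.zero_apply] at this
    rwa [show d - 1 - (d - 1 - n) = n by omega] at this
  · exact (degree_lt_iff_coeff_zero _ _).1 hQ n (by omega)

lemma contDiff_prod_coeff {E ι : Type*} [NormedAddCommGroup E] [NormedSpace ℝ E]
    {k : WithTop ℕ∞} (s : Finset ι) (p : ι → E → Polynomial ℝ)
    (hp : ∀ i n, ContDiff ℝ k (fun c => (p i c).coeff n)) (n : ℕ) :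
    ContDiff ℝ k (fun c => (∏ i ∈ s, p i c).coeff n) := by
  classical
  induction s using Finset.induction_on generalizing n with
  | empty => simpa using contDiff_const
  | insert a s ha ih =>
    simp only [Finset.prod_insert ha, coeff_mul]
    exact ContDiff.sum fun x _ => (hp a _).mul (ih _)

lemma hasDerivAt_prod_coeff {ι : Type*} [DecidableEq ι] (s : Finset ι)
    (P H : ι → Polynomial ℝ) (n : ℕ) :
    HasDerivAt (fun t : ℝ => (∏ i ∈ s, (P i + C t * H i)).coeff n)
      ((∑ i ∈ s, (∏ j ∈ s.erase i, P j) * H i).coeff n) 0 := by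
  induction s using Finset.induction_on generalizing n with
  | empty => simpa using hasDerivAt_const (0 : ℝ) _
  | insert a s ha ih =>
    have key : (∑ i ∈ insert a s, (∏ j ∈ (insert a s).erase i, P j) * H i)
        = H a * (∏ j ∈ s, P j) + P a * ∑ i ∈ s, (∏ j ∈ s.erase i, P j) * H i := by
      rw [Finset.sum_insert ha, Finset.erase_insert ha, Finset.mul_sum, mul_comm]
      congr 1
      refine Finset.sum_congr rfl fun i hi => ?_
      have hne : a ≠ i := fun h => ha (h ▸ hi)
      rw [Finset.erase_insert_of_ne hne, Finset.prod_insert (by simp [ha]), mul_assoc]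
    rw [key]
    simp only [Finset.prod_insert ha, coeff_add, coeff_mul (P a), coeff_mul (H a), coeff_mul (P a + _),
      ← Finset.sum_add_distrib]
    refine HasDerivAt.fun_sum fun x _ => ?_
    have h1 : HasDerivAt (fun t : ℝ => (P a).coeff x.1 + (C t * H a).coeff x.1)
        ((H a).coeff x.1) 0 := by
      simp only [coeff_C_mul]
      simpa using ((hasDerivAt_id (0 : ℝ)).mul_const ((H a).coeff x.1)).const_add ((P a).coeff x.1)
    have := h1.fun_mul (ih x.2)
    simpa using this

lemma deriv_inj {m : ℕ} (P H : Fin m → Polynomial ℝ) (hmonic : ∀ i, (P i).Monic)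
    (hcop : ∀ i j, i ≠ j → IsCoprime (P i) (P j))
    (hH : ∀ i, (H i).degree < (P i).degree)
    (h0 : ∑ i, (∏ j ∈ Finset.univ.erase i, P j) * H i = 0) (i : Fin m) : H i = 0 := by
  have hdvd : P i ∣ (∏ j ∈ Finset.univ.erase i, P j) * H i := by
    rw [← Finset.add_sum_erase _ _ (Finset.mem_univ i)] at h0
    rw [eq_neg_of_add_eq_zero_left h0, dvd_neg]
    refine Finset.dvd_sum fun k hk => Dvd.dvd.mul_right ?_ _
    exact Finset.dvd_prod_of_mem P (by simpa using (Finset.ne_of_mem_erase hk).symm)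
  have hc : IsCoprime (P i) (∏ j ∈ Finset.univ.erase i, P j) :=
    IsCoprime.prod_right fun j hj => hcop i j (Finset.ne_of_mem_erase hj).symm
  exact eq_zero_of_dvd_of_degree_lt (hc.dvd_of_dvd_mul_left hdvd) (hH i)

lemma deriv_degree {m : ℕ} (P H : Fin m → Polynomial ℝ) (hmonic : ∀ i, (P i).Monic)
    (d : Fin m → ℕ) (hd : ∀ i, (P i).natDegree = d i)
    (hH : ∀ i, (H i).degree < d i) :
    (∑ i, (∏ j ∈ Finset.univ.erase i, P j) * H i).degree < ((∑ i, d i : ℕ) : WithBot ℕ) := by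
  rw [← mem_degreeLT]
  refine Submodule.sum_mem _ fun i _ => ?_
  rw [mem_degreeLT, degree_mul, degree_prod,
    Finset.sum_congr rfl (fun j _ => (degree_eq_natDegree (hmonic j).ne_zero).trans
      (congrArg _ (hd j))), ← Finset.sum_erase_add _ _ (Finset.mem_univ i)]
  push_cast
  have := hH i
  by_cases h0 : H i = 0
  · simp [h0]
    rw [← Nat.cast_sum]
    exact WithBot.bot_lt_coe (∑ x ∈ Finset.univ.erase i, d x)
  · rw [degree_eq_natDegree h0] at this ⊢
    norm_cast at this ⊢
    omega

/-- Let `P_1, …, P_m` be monic real polynomials, pairwise without common complex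
root (i.e. pairwise coprime), and `P = P_1 ⋯ P_m`.  Identifying monic
polynomials of degree `d` with `ℝ^d` via their non-leading coefficients, there
are open neighbourhoods `U` of `P` and `U_i` of `P_i` such that the product map
`U_1 × ⋯ × U_m → U` is a `C^∞` diffeomorphism. -/
theorem product_map_local_diffeo (m : ℕ) (hm : 1 ≤ m) (P : Fin m → Polynomial ℝ)
    (hmonic : ∀ i, (P i).Monic)
    (hcop : ∀ i j, i ≠ j → IsCoprime (P i) (P j))
    (d : Fin m → ℕ) (hd : ∀ i, (P i).natDegree = d i) :
    ∃ (U : Set (Fin (∑ i, d i) → ℝ)) (Ui : (i : Fin m) → Set (Fin (d i) → ℝ)),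
      IsOpen U ∧ (∀ i, IsOpen (Ui i)) ∧
      coeffVec (∑ i, d i) (∏ i, P i) ∈ U ∧ (∀ i, coeffVec (d i) (P i) ∈ Ui i) ∧
      ∃ e : PartialHomeomorph ((i : Fin m) → (Fin (d i) → ℝ)) (Fin (∑ i, d i) → ℝ),
        e.source = {c | ∀ i, c i ∈ Ui i} ∧ e.target = U ∧
        (∀ c ∈ e.source, e c = coeffVec (∑ i, d i) (∏ i, toPoly (d i) (c i))) ∧
        ContDiffOn ℝ (⊤ : ℕ∞) e e.source ∧ ContDiffOn ℝ (⊤ : ℕ∞) e.symm e.target := by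
  classical
  set N := ∑ i, d i with hN
  let a : (i : Fin m) → (Fin (d i) → ℝ) := fun i => coeffVec (d i) (P i)
  have ha : ∀ i, toPoly (d i) (a i) = P i := fun i =>
    toPoly_coeffVec _ _ (hmonic i) (hd i)
  let F : ((i : Fin m) → (Fin (d i) → ℝ)) → (Fin N → ℝ) :=
    fun c => coeffVec N (∏ i, toPoly (d i) (c i))
  have hFa : F a = coeffVec N (∏ i, P i) := by
    simp only [F, ha]
  have hF : ContDiff ℝ (⊤ : WithTop ℕ∞) F := by
    rw [contDiff_pi]
    intro j
    refine contDiff_prod_coeff Finset.univ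
      (fun i (c : (i : Fin m) → (Fin (d i) → ℝ)) => toPoly (d i) (c i)) ?_ _
    intro i n
    simp only [toPoly_eq, coeff_add, lowPoly_coeff]
    refine contDiff_const.add (ContDiff.sum fun j _ => ContDiff.mul ?_ contDiff_const)
    exact ((ContinuousLinearMap.proj (R := ℝ) (φ := fun _ : Fin (d i) => ℝ) j).comp
      (ContinuousLinearMap.proj (R := ℝ) (φ := fun i : Fin m => Fin (d i) → ℝ) i)).contDiff
  have hdiff : DifferentiableAt ℝ F a := hF.contDiffAt.differentiableAt (by simp)
  have hL : ∀ h, fderiv ℝ F a h =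
      coeffVec N (∑ i, (∏ j ∈ Finset.univ.erase i, P j) * lowPoly (d i) (h i)) := by
    intro h
    have h1 : HasDerivAt (fun t : ℝ => F (a + t • h)) (fderiv ℝ F a h) 0 :=
      hdiff.hasFDerivAt.hasLineDerivAt h
    refine h1.unique ?_
    rw [hasDerivAt_pi]
    intro j
    have := hasDerivAt_prod_coeff Finset.univ P (fun i => lowPoly (d i) (h i)) (N - 1 - (j : ℕ))
    simpa only [F, coeffVec, Pi.add_apply, Pi.smul_apply, toPoly_add_smul, ha] using this
  have hinj : Function.Injective (fderiv ℝ F a) := by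
    rw [injective_iff_map_eq_zero]
    intro h h0
    rw [hL] at h0
    have hs := eq_zero_of_coeffVec _ _
      (deriv_degree P (fun i => lowPoly (d i) (h i)) hmonic d hd
        (fun i => lowPoly_degree _ _)) h0
    have hz := deriv_inj P (fun i => lowPoly (d i) (h i)) hmonic hcop (fun i => by
      rw [degree_eq_natDegree (hmonic i).ne_zero, hd i]
      exact lowPoly_degree _ _) hs
    funext i j
    rw [← lowPoly_coeff_self (d i) (h i) j, hz i]
    simp
  have hrank : Module.finrank ℝ ((i : Fin m) → (Fin (d i) → ℝ)) =
      Module.finrank ℝ (Fin N → ℝ) := by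
    rw [Module.finrank_pi_fintype]
    simp [hN]
  let f' : ((i : Fin m) → (Fin (d i) → ℝ)) ≃L[ℝ] (Fin N → ℝ) :=
    (LinearEquiv.ofInjectiveOfFinrankEq (fderiv ℝ F a).toLinearMap hinj hrank).toContinuousLinearEquiv
  have hf' : HasFDerivAt F (f' : _ →L[ℝ] _) a := by
    convert hdiff.hasFDerivAt using 1
    ext x
    rfl
  have hn : (⊤ : WithTop ℕ∞) ≠ 0 := by simp
  let e := hF.contDiffAt.toOpenPartialHomeomorph F hf' hn
  have hae : a ∈ e.source := hF.contDiffAt.mem_toOpenPartialHomeomorph_source hf' hn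
  have hsm : ∀ᶠ y in nhds (F a), ContDiffAt ℝ (⊤ : WithTop ℕ∞) e.symm y :=
    (hF.contDiffAt.to_localInverse hf' hn).eventually (by simp)
  have hnb : ∀ᶠ c in nhds a, c ∈ e.source ∧ ContDiffAt ℝ (⊤ : WithTop ℕ∞) e.symm (F c) :=
    (e.open_source.eventually_mem hae).and (hF.continuous.continuousAt.eventually hsm)
  obtain ⟨r, hr, hball⟩ := Metric.eventually_nhds_iff_ball.1 hnb
  let e' := e.restrOpen (Metric.ball a r) Metric.isOpen_ball
  have hsrc : e'.source = Metric.ball a r := by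
    have : e'.source = e.source ∩ Metric.ball a r := e.restrOpen_source _ _
    rw [this]
    exact Set.inter_eq_right.2 fun c hc => (hball c hc).1
  have hae' : a ∈ e'.source := by rw [hsrc]; exact Metric.mem_ball_self hr
  refine ⟨e'.target, fun i => Metric.ball (a i) r, e'.open_target,
    fun i => Metric.isOpen_ball, ?_, fun i => Metric.mem_ball_self hr,
    e'.toPartialHomeomorph, ?_, rfl, fun c _ => rfl, ?_, ?_⟩
  · rw [← hFa]
    exact e'.map_source hae'
  · change e'.source = _
    rw [hsrc, ball_pi _ hr]
    ext c
    simp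
  · exact (hF.of_le le_top).contDiffOn
  · intro y hy
    have hy' : y ∈ e'.target := hy
    have h1 : e'.symm y ∈ Metric.ball a r := hsrc ▸ e'.map_target hy'
    have h2 := (hball _ h1).2
    have h3 : F (e'.symm y) = y := e'.right_inv hy'
    rw [h3] at h2
    exact (h2.of_le le_top).contDiffWithinAt
end

section
/- If S_{v_1} and S_{v_2} are nonempty strata and S_{v_1} is contained in the closure of S_{v_2} in ℝ^n, then l(v_1) ≥ l(v_2) and l(v_1) − l(v_2) is an even integer. -/
open Polynomial

lemma aux_even (d : ℕ) : ∀ q : ℝ[X], q.natDegree = d → q ≠ 0 → (∀ x, ¬ q.IsRoot x) → Even d := by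
  induction d using Nat.strong_induction_on with
  | _ d ih =>
    intro q hd hq hr
    rcases Nat.eq_zero_or_pos d with h0 | hpos
    · simp [h0]
    · have hnu : ¬ IsUnit q := fun h => by
        have := natDegree_eq_zero_of_isUnit h
        omega
      obtain ⟨g, hg, h, rfl⟩ := WfDvdMonoid.exists_irreducible_factor hnu hq
      have hg0 : g ≠ 0 := hg.ne_zero
      have hh0 : h ≠ 0 := right_ne_zero_of_mul hq
      have h2 := hg.natDegree_le_two
      have h3 := hg.natDegree_pos
      have h1 : g.natDegree ≠ 1 := by
        intro h1
        obtain ⟨x, hx⟩ := exists_root_of_degree_eq_one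
          ((degree_eq_iff_natDegree_eq hg0).2 h1)
        exact hr x (by simp [IsRoot.def.1 hx])
      rw [natDegree_mul hg0 hh0] at hd
      have he := ih h.natDegree (by omega) h rfl hh0
        (fun x hx => hr x (by simp [IsRoot.def.1 hx]))
      have : d = h.natDegree + 2 := by omega
      rw [this]
      exact he.add even_two

lemma aux_monic (n : ℕ) (hn : 1 ≤ n) (a : Fin n → ℝ) :
    (Ppoly n a).Monic ∧ (Ppoly n a).natDegree = n := by
  have hlt : degree (∑ i : Fin n, C (a i) * X ^ (n - 1 - (i : ℕ))) < n :=
    (degree_sum_le _ _).trans_lt <|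
      (Finset.sup_lt_iff <| WithBot.bot_lt_coe n).2 fun k _hk =>
        (degree_C_mul_X_pow_le _ _).trans_lt <| WithBot.coe_lt_coe.2 (by
          have := k.is_lt
          change n - 1 - (k : ℕ) < n
          omega)
  refine ⟨monic_X_pow_add hlt, ?_⟩
  unfold Ppoly
  rw [natDegree_add_eq_left_of_degree_lt]
  · simp
  · simpa using hlt

lemma aux_sum (n : ℕ) (a : Fin n → ℝ) : (MV n a).sum = Multiset.card (Ppoly n a).roots := by
  classical
  unfold MV
  rw [← Multiset.toFinset_sum_count_eq]
  simp only [count_roots]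
  rw [← Multiset.sum_coe, ← Multiset.map_coe, Finset.sort_eq]
  rfl

lemma aux_fun {α : Type*} (s : Multiset α) (k : ℕ) (hk : Multiset.card s = k) :
    ∃ f : Fin k → α, s = Finset.univ.val.map f := by
  subst hk
  induction s using Quotient.inductionOn with
  | _ l =>
    refine ⟨l.get, ?_⟩
    exact ((Fin.univ_val_map l.get).trans (by rw [List.ofFn_get]; rfl)).symm

lemma aux_split (n : ℕ) (hn : 1 ≤ n) (a : Fin n → ℝ) (k : ℕ)
    (hk : Multiset.card (Ppoly n a).roots = k) :
    k ≤ n ∧ Even (n - k) ∧ ∃ (x : Fin k → ℝ) (w : Fin (n - k) → ℂ),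
      (Ppoly n a).map (algebraMap ℝ ℂ) =
        (∏ i, (X - C ((x i : ℝ) : ℂ))) * ∏ j, (X - C (w j)) := by
  obtain ⟨hm, hd⟩ := aux_monic n hn a
  obtain ⟨q, hq, hdeg, hroots⟩ := exists_prod_multiset_X_sub_C_mul (Ppoly n a)
  have hqm : q.Monic := by
    refine Monic.of_mul_monic_left (monic_multiset_prod_of_monic (Ppoly n a).roots (fun x : ℝ => X - C x)
      fun i _ => monic_X_sub_C i) ?_
    rw [hq]; exact hm
  rw [hk, hd] at hdeg
  have hqd : q.natDegree = n - k := by omega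
  refine ⟨by omega, ?_, ?_⟩
  · refine aux_even _ q hqd hqm.ne_zero fun x hx => ?_
    have := (mem_roots hqm.ne_zero).2 hx
    simp [hroots] at this
  · obtain ⟨x, hx⟩ := aux_fun _ k hk
    have hs : (q.map (algebraMap ℝ ℂ)).Splits := IsAlgClosed.splits _
    have hc : Multiset.card (q.map (algebraMap ℝ ℂ)).roots = n - k := by
      rw [← hs.natDegree_eq_card_roots, natDegree_map, hqd]
    obtain ⟨w, hw⟩ := aux_fun _ _ hc
    refine ⟨x, w, ?_⟩
    have h1 := hs.eq_prod_roots_of_monic (hqm.map _)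
    rw [hw, Multiset.map_map] at h1
    conv_lhs => rw [← hq, Polynomial.map_mul, h1, hx, Multiset.map_map]
    congr 1
    change (Polynomial.map (algebraMap ℝ ℂ) (∏ i, (X - C (x i)))) = _
    rw [Polynomial.map_prod]
    simp

lemma aux_eval (n : ℕ) (a : Fin n → ℝ) (z : ℂ) :
    ((Ppoly n a).map (algebraMap ℝ ℂ)).eval z =
      z ^ n + ∑ i : Fin n, (a i : ℂ) * z ^ (n - 1 - (i : ℕ)) := by
  simp [Ppoly, eval_finsetSum, Polynomial.map_sum]

lemma aux_bound (n : ℕ) (hn : 1 ≤ n) (a : Fin n → ℝ) (B : ℝ) (hB : ∀ i, |a i| ≤ B) (z : ℂ)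
    (hz : ((Ppoly n a).map (algebraMap ℝ ℂ)).eval z = 0) : ‖z‖ ≤ max 1 (n * B) := by
  rw [aux_eval] at hz
  by_contra! hlt
  have h1 : 1 < ‖z‖ := (le_max_left _ _).trans_lt hlt
  have h2 : n * B < ‖z‖ := (le_max_right _ _).trans_lt hlt
  have h3 : ‖z‖ ^ n ≤ n * B * ‖z‖ ^ (n - 1) := by
    rw [← norm_pow, eq_neg_of_add_eq_zero_left hz, norm_neg]
    refine (norm_sum_le _ _).trans ?_
    have : ∀ i ∈ (Finset.univ : Finset (Fin n)),
        ‖(a i : ℂ) * z ^ (n - 1 - (i : ℕ))‖ ≤ B * ‖z‖ ^ (n - 1) := by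
      intro i _
      rw [norm_mul, norm_pow, Complex.norm_real, Real.norm_eq_abs]
      exact mul_le_mul (hB i) (pow_le_pow_right₀ h1.le (Nat.sub_le _ _)) (by positivity)
        ((abs_nonneg _).trans (hB i))
    refine (Finset.sum_le_sum this).trans ?_
    simp [mul_assoc]
  have h4 : ‖z‖ ^ n = ‖z‖ * ‖z‖ ^ (n - 1) := by
    rw [← pow_succ']
    congr 1
    omega
  rw [h4] at h3
  have h5 : 0 < ‖z‖ ^ (n - 1) := by positivity
  have := le_of_mul_le_mul_right h3 h5
  linarith

lemma aux_closed (n : ℕ) (hn : 1 ≤ n) (k : ℕ) (s : Set (Fin n → ℝ))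
    (hs : ∀ a ∈ s, Multiset.card (Ppoly n a).roots = k) (a : Fin n → ℝ) (ha : a ∈ closure s) :
    k ≤ Multiset.card (Ppoly n a).roots := by
  obtain ⟨u, hu, hlim⟩ := mem_closure_iff_seq_limit.1 ha
  choose _ _ x w hxw using fun m => aux_split n hn (u m) k (hs _ (hu m))
  obtain ⟨B, hB⟩ := (Metric.isBounded_range_of_tendsto u hlim).exists_norm_le
  have hB' : ∀ m i, |u m i| ≤ B := fun m i =>
    (norm_le_pi_norm (u m) i).trans (hB _ ⟨m, rfl⟩)
  set R := max 1 (n * B) with hR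
  have hR0 : 0 ≤ R := le_trans zero_le_one (le_max_left _ _)
  have hx : ∀ m, ‖x m‖ ≤ R := fun m => (pi_norm_le_iff_of_nonneg hR0).2 fun i => by
    have := aux_bound n hn (u m) B (hB' m) (x m i) (by
      rw [hxw, eval_mul, eval_prod, Finset.prod_eq_zero (Finset.mem_univ i) (by simp), zero_mul])
    rwa [Complex.norm_real] at this
  have hw : ∀ m, ‖w m‖ ≤ R := fun m => (pi_norm_le_iff_of_nonneg hR0).2 fun i =>
    aux_bound n hn (u m) B (hB' m) (w m i) (by
      rw [hxw, eval_mul, eval_prod (s := Finset.univ) (p := fun j => X - C (w m j)),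
        Finset.prod_eq_zero (Finset.mem_univ i) (by simp), mul_zero])
  obtain ⟨⟨x0, w0⟩, _, φ, hφ, hconv⟩ := tendsto_subseq_of_bounded
    (x := fun m => (x m, w m)) (Metric.isBounded_closedBall (x := 0) (r := R))
    (fun m => by
      rw [mem_closedBall_zero_iff]
      exact max_le (hx m) (hw m))
  have hcx : Filter.Tendsto (fun m => x (φ m)) Filter.atTop (nhds x0) :=
    (continuous_fst.tendsto _).comp hconv
  have hcw : Filter.Tendsto (fun m => w (φ m)) Filter.atTop (nhds w0) :=
    (continuous_snd.tendsto _).comp hconv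
  have hcu : Filter.Tendsto (fun m => u (φ m)) Filter.atTop (nhds a) :=
    hlim.comp hφ.tendsto_atTop
  have key : (Ppoly n a).map (algebraMap ℝ ℂ) =
      (∏ i, (X - C ((x0 i : ℝ) : ℂ))) * ∏ j, (X - C (w0 j)) := by
    refine Polynomial.funext fun z => ?_
    have hL : Filter.Tendsto (fun m => ((Ppoly n (u (φ m))).map (algebraMap ℝ ℂ)).eval z)
        Filter.atTop (nhds (((Ppoly n a).map (algebraMap ℝ ℂ)).eval z)) := by
      simp only [aux_eval]
      have hc : Continuous fun b : Fin n → ℝ =>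
          z ^ n + ∑ i : Fin n, (b i : ℂ) * z ^ (n - 1 - (i : ℕ)) := by fun_prop
      exact (hc.tendsto a).comp hcu
    refine tendsto_nhds_unique hL ?_
    simp only [hxw, eval_mul, eval_prod, eval_sub, eval_X, eval_C]
    have hc1 : Continuous fun b : Fin k → ℝ => ∏ i, (z - ((b i : ℝ) : ℂ)) := by fun_prop
    have hc2 : Continuous fun b : Fin (n - k) → ℂ => ∏ i, (z - b i) := by fun_prop
    exact ((hc1.tendsto x0).comp hcx).mul ((hc2.tendsto w0).comp hcw)
  have hdvd : (∏ i, (X - C (x0 i))) ∣ Ppoly n a := by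
    rw [← map_dvd_map' (algebraMap ℝ ℂ), key, Polynomial.map_prod]
    simp
  have hle := Multiset.card_le_card (roots.le_of_dvd (aux_monic n hn a).1.ne_zero hdvd)
  have hr : (∏ i, (X - C (x0 i))).roots = Finset.univ.val.map x0 := by
    have := roots_multiset_prod_X_sub_C (Finset.univ.val.map x0)
    rwa [Multiset.map_map] at this
  rw [hr] at hle
  simpa using hle

/-- If `S_{v₁}` and `S_{v₂}` are nonempty strata and `S_{v₁}` is contained in the
closure of `S_{v₂}` in `ℝ^n`, then `l(v₁) ≥ l(v₂)` and `l(v₁) − l(v₂)` is even. -/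
theorem length_of_adjacent_strata (n : ℕ) (hn : 1 ≤ n) (v₁ v₂ : List ℕ)
    (hv₁ : ∀ m ∈ v₁, 0 < m) (hv₂ : ∀ m ∈ v₂, 0 < m)
    (hne₁ : (Stratum n v₁).Nonempty) (hne₂ : (Stratum n v₂).Nonempty)
    (hsub : Stratum n v₁ ⊆ closure (Stratum n v₂)) :
    v₂.sum ≤ v₁.sum ∧ Even (v₁.sum - v₂.sum) := by
  have hcard : ∀ v, ∀ a ∈ Stratum n v, Multiset.card (Ppoly n a).roots = v.sum := by
    intro v a ha
    rw [← aux_sum, show MV n a = v from ha]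
  obtain ⟨a, ha⟩ := hne₁
  obtain ⟨b, hb⟩ := hne₂
  have hle := aux_closed n hn v₂.sum _ (hcard v₂) a (hsub ha)
  rw [hcard _ _ ha] at hle
  obtain ⟨h1, ⟨c, h2⟩, _⟩ := aux_split n hn a _ (hcard _ _ ha)
  obtain ⟨h3, ⟨d, h4⟩, _⟩ := aux_split n hn b _ (hcard _ _ hb)
  exact ⟨hle, d - c, by omega⟩
end

section
/- Let S_{v_1} and S_{v_2} be nonempty strata with l(v_1) = l(v_2). Then S_{v_1} is contained in the closure of S_{v_2} in ℝ^n if and only if v_1 is obtained from v_2 by an operation of type A, i.e. if and only if there is a partition of the list v_2 into consecutive nonempty blocks such that v_1 is the list of the sums of these blocks. -/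
open Polynomial

/-- `OpA w w'` : the list `w'` is obtained from `w` by an operation of type A,
i.e. by partitioning `w` into consecutive nonempty blocks and replacing each
block by the sum of its entries. -/
def OpA (w w' : List ℕ) : Prop :=
  ∃ B : List (List ℕ), (∀ b ∈ B, b ≠ []) ∧ B.flatten = w ∧ w' = B.map List.sum

open Filter Topology

noncomputable def MVm (s : Multiset ℝ) : List ℕ :=
  (s.toFinset.sort (· ≤ ·)).map fun x => s.count x

lemma MV_eq (n : ℕ) (a : Fin n → ℝ) : MV n a = MVm (Ppoly n a).roots := by
  simp [MV, MVm, Polynomial.count_roots]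

lemma MVm_cons (m : ℕ) (hm : 0 < m) (z : ℝ) (s : Multiset ℝ) (h : ∀ b ∈ s, z < b) :
    MVm (m • {z} + s) = m :: MVm s := by
  have hz : z ∉ s := fun hh => lt_irrefl _ (h z hh)
  have h1 : (m • ({z} : Multiset ℝ) + s).toFinset = insert z s.toFinset := by
    ext b
    simp [Multiset.mem_nsmul, hm.ne']
  unfold MVm
  rw [h1, Finset.sort_insert (r := (· ≤ ·)) (fun b hb => (h b (by simpa using hb)).le) (by simpa using hz)]
  simp only [List.map_cons]
  congr 1
  · simp [Multiset.count_eq_zero_of_notMem hz]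
  · apply List.map_congr_left
    intro b hb
    have hb' : b ∈ s := by simpa using hb
    have : b ≠ z := (h b hb').ne'
    simp [Multiset.count_singleton, this]

lemma count_split (z : ℝ) (s : Multiset ℝ) :
    s = s.count z • {z} + s.filter (fun b => b ≠ z) := by
  conv_lhs => rw [← Multiset.filter_add_not (fun b => b = z) s]
  rw [Multiset.filter_eq', Multiset.nsmul_singleton]

lemma MVm_uncons (s : Multiset ℝ) (m : ℕ) (w : List ℕ) (h : MVm s = m :: w) :
    ∃ z s', s = m • {z} + s' ∧ (∀ b ∈ s', z < b) ∧ MVm s' = w ∧ 0 < m := by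
  have h' := h
  unfold MVm at h'
  obtain ⟨z, rest, h1, h2, h3⟩ := List.map_eq_cons_iff.1 h'
  have hsort := Finset.pairwise_sort s.toFinset (· ≤ ·)
  have hmem : ∀ b, b ∈ s ↔ b ∈ z :: rest := by
    intro b; rw [← h1]; simp
  rw [h1, List.pairwise_cons] at hsort
  have hlt : ∀ b ∈ s.filter (fun b => b ≠ z), z < b := by
    intro b hb
    rw [Multiset.mem_filter] at hb
    have := (hmem b).1 hb.1
    rcases List.mem_cons.1 this with h | h
    · exact absurd h hb.2
    · exact lt_of_le_of_ne (hsort.1 b h) (Ne.symm hb.2)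
  have hpos : 0 < s.count z := Multiset.count_pos.2 ((hmem z).2 (by simp))
  have hs := count_split z s
  have := MVm_cons _ hpos z _ hlt
  rw [← hs, h] at this
  have h4 := List.cons.inj this
  refine ⟨z, _, ?_, hlt, h4.2.symm, ?_⟩
  · rw [h4.1]; exact hs
  · rw [h4.1]; exact hpos

lemma mem_S {q : ℕ} (v : Fin q → ℕ) (x : Fin q → ℝ) (b : ℝ)
    (h : b ∈ ∑ j, v j • ({x j} : Multiset ℝ)) : ∃ j, b = x j := by
  rw [Multiset.mem_sum] at h
  obtain ⟨j, _, hj⟩ := h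
  exact ⟨j, by simpa using Multiset.mem_of_mem_nsmul hj⟩

lemma S_mem {q : ℕ} (v : Fin q → ℕ) (hv : ∀ j, 0 < v j) (x : Fin q → ℝ) (j) :
    x j ∈ ∑ j, v j • ({x j} : Multiset ℝ) := by
  rw [Multiset.mem_sum]
  exact ⟨j, Finset.mem_univ _, by simp [Multiset.mem_nsmul, (hv j).ne']⟩

lemma S_cons (m : ℕ) (t : List ℕ) (x : Fin (m :: t).length → ℝ) :
    ∑ j, (m :: t).get j • ({x j} : Multiset ℝ) =
      m • {x ⟨0, by simp⟩} + ∑ j : Fin t.length, t.get j • ({x j.succ} : Multiset ℝ) :=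
  Fin.sum_univ_succ (n := t.length) _

lemma MVm_strict (v : List ℕ) (hv : ∀ m ∈ v, 0 < m) (x : Fin v.length → ℝ) (hx : StrictMono x) :
    MVm (∑ j, v.get j • ({x j} : Multiset ℝ)) = v := by
  induction v with
  | nil => simp [MVm]
  | cons m t ih =>
    rw [S_cons, MVm_cons m (hv m (by simp))]
    · rw [ih (fun k hk => hv k (by simp [hk])) (fun j => x j.succ)
        (fun i j h => hx (Fin.succ_lt_succ_iff.2 h))]
    · intro b hb
      obtain ⟨j, rfl⟩ := mem_S _ _ _ hb
      exact hx (Fin.succ_pos j)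

lemma OpA_of_mono (v : List ℕ) (hv : ∀ m ∈ v, 0 < m) (x : Fin v.length → ℝ) (hx : Monotone x) :
    OpA v (MVm (∑ j, v.get j • ({x j} : Multiset ℝ))) := by
  induction v with
  | nil => exact ⟨[], by simp [MVm]⟩
  | cons m t ih =>
    have hm := hv m (by simp)
    have ih := ih (fun k hk => hv k (by simp [hk])) (fun j => x j.succ)
        (fun i j h => hx (Fin.succ_le_succ_iff.2 h))
    rw [S_cons]
    set z := x ⟨0, by simp⟩ with hz
    have hge : ∀ b ∈ ∑ j : Fin t.length, t.get j • ({x j.succ} : Multiset ℝ), z ≤ b := by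
      intro b hb
      obtain ⟨j, rfl⟩ := mem_S _ _ _ hb
      exact hx (Fin.zero_le _)
    generalize ∑ j : Fin t.length, t.get j • ({x j.succ} : Multiset ℝ) = s at *
    obtain ⟨B, hB, hB1, hB2⟩ := ih
    by_cases hzs : z ∈ s
    · have hsp := count_split z s
      have hlt : ∀ b ∈ s.filter (fun b => b ≠ z), z < b := by
        intro b hb
        rw [Multiset.mem_filter] at hb
        exact lt_of_le_of_ne (hge b hb.1) (Ne.symm hb.2)
      have hc := Multiset.count_pos.2 hzs
      have e1 := MVm_cons _ hc z _ hlt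
      have e2 := MVm_cons (m + s.count z) (by omega) z _ hlt
      rw [← hsp] at e1
      rw [add_smul, add_assoc, ← hsp] at e2
      rw [e2]
      rw [e1] at hB2
      obtain ⟨b, B', rfl, h1, h2⟩ := List.map_eq_cons_iff.1 hB2.symm
      refine ⟨(m :: b) :: B', ?_, ?_, ?_⟩
      · intro c hc
        rcases List.mem_cons.1 hc with h | h
        · simp [h]
        · exact hB c (by simp [h])
      · simp [← hB1]
      · simp [h1, h2]
    · rw [MVm_cons m hm z s (fun b hb => lt_of_le_of_ne (hge b hb) (by rintro rfl; exact hzs hb))]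
      refine ⟨[m] :: B, ?_, ?_, ?_⟩
      · intro c hc
        rcases List.mem_cons.1 hc with h | h
        · simp [h]
        · exact hB c h
      · simp [← hB1]
      · simp [hB2]

lemma mono_of_OpA (v : List ℕ) (hv : ∀ m ∈ v, 0 < m) (s : Multiset ℝ) (h : OpA v (MVm s)) :
    ∃ x : Fin v.length → ℝ, Monotone x ∧ s = ∑ j, v.get j • ({x j} : Multiset ℝ) := by
  induction v generalizing s with
  | nil =>
    obtain ⟨B, hB, hB1, hB2⟩ := h
    have : B = [] := by
      rcases B with _ | ⟨b, B⟩
      · rfl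
      · simp at hB1
        exact absurd hB1.1 (hB b (by simp))
    subst this
    have : s = 0 := by
      simp only [MVm, List.map_nil, List.map_eq_nil_iff] at hB2
      have := congrArg List.length hB2
      simpa using this
    exact ⟨fun _ => 0, fun _ _ _ => le_rfl, by simp [this]⟩
  | cons m t ih =>
    have hm := hv m (by simp)
    have ht : ∀ k ∈ t, 0 < k := fun k hk => hv k (by simp [hk])
    obtain ⟨B, hB, hB1, hB2⟩ := h
    have key : ∃ z s', s = m • {z} + s' ∧ (∀ b ∈ s', z ≤ b) ∧ OpA t (MVm s') := by
      rcases B with _ | ⟨b, B⟩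
      · simp at hB1
      rcases b with _ | ⟨m', b⟩
      · exact absurd rfl (hB [] (by simp))
      simp only [List.flatten_cons, List.cons_append, List.cons.injEq] at hB1
      obtain ⟨rfl, hB1⟩ := hB1
      obtain ⟨z, s', h1, h2, h3, h4⟩ := MVm_uncons s _ _ hB2
      have hBB : ∀ c ∈ B, c ≠ [] := fun c hc => hB c (by simp [hc])
      by_cases hb : b = []
      · subst hb
        exact ⟨z, s', by simpa using h1, fun b hb => (h2 b hb).le, B, hBB, by simpa using hB1, h3⟩
      · have hbs : 0 < b.sum := by
          obtain ⟨c, hc⟩ := List.exists_mem_of_ne_nil b hb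
          have := ht c (by rw [← hB1]; simp [hc])
          exact lt_of_lt_of_le this (List.le_sum_of_mem hc)
        refine ⟨z, b.sum • {z} + s', ?_, ?_, b :: B, ?_, ?_, ?_⟩
        · rw [h1, List.sum_cons, add_smul, add_assoc]
        · intro c hc
          rcases Multiset.mem_add.1 hc with h | h
          · have := Multiset.mem_of_mem_nsmul h
            simp at this
            exact this.ge
          · exact (h2 c h).le
        · intro c hc
          rcases List.mem_cons.1 hc with h | h
          · simpa [h] using hb
          · exact hBB c h
        · simpa using hB1
        · rw [MVm_cons _ hbs _ _ h2, h3]; simp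
    obtain ⟨z, s', h1, h2, h3⟩ := key
    obtain ⟨x, hx, hs⟩ := ih ht s' h3
    refine ⟨Fin.cons z x, ?_, ?_⟩
    · intro i j
      refine Fin.cases ?_ (fun i => ?_) i <;> refine Fin.cases ?_ (fun j => ?_) j
      · simp
      · intro _
        simp only [Fin.cons_zero, Fin.cons_succ]
        apply h2
        rw [hs]
        exact S_mem _ (fun j => ht _ (List.get_mem _ _)) x j
      · intro h
        exact absurd h (by simp [Fin.le_def])
      · intro h
        simp only [Fin.cons_succ]
        exact hx (Fin.succ_le_succ_iff.1 h)
    · rw [S_cons, h1, hs]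
      rfl

lemma OpA_refl (v : List ℕ) : OpA v v :=
  ⟨v.map fun m => [m], by simp, by induction v <;> simp_all, by simp [Function.comp_def]⟩

/-! polynomial part -/

lemma Ppoly_tail_degree (n : ℕ) (hn : 1 ≤ n) (a : Fin n → ℝ) :
    (∑ i : Fin n, C (a i) * X ^ (n - 1 - (i : ℕ)) : ℝ[X]).degree < (n : WithBot ℕ) := by
  refine lt_of_le_of_lt (b := ((n-1 : ℕ) : WithBot ℕ)) ?_ (by exact_mod_cast (show n - 1 < n by omega))
  refine (Polynomial.degree_sum_le _ _).trans (Finset.sup_le fun i _ => ?_)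
  refine (Polynomial.degree_C_mul_X_pow_le _ _).trans ?_
  exact_mod_cast Nat.sub_le _ _

lemma Ppoly_monic (n : ℕ) (hn : 1 ≤ n) (a : Fin n → ℝ) : (Ppoly n a).Monic :=
  Polynomial.monic_X_pow_add (Ppoly_tail_degree n hn a)

lemma Ppoly_natDegree (n : ℕ) (hn : 1 ≤ n) (a : Fin n → ℝ) : (Ppoly n a).natDegree = n := by
  apply Polynomial.natDegree_eq_of_degree_eq_some
  unfold Ppoly
  rw [Polynomial.degree_add_eq_left_of_degree_lt] <;> rw [Polynomial.degree_X_pow]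
  exact Ppoly_tail_degree n hn a

lemma Ppoly_coeff (n : ℕ) (a : Fin n → ℝ) (i : Fin n) :
    (Ppoly n a).coeff (n - 1 - (i : ℕ)) = a i := by
  have hi := i.2
  unfold Ppoly
  simp only [coeff_add, finset_sum_coeff, coeff_C_mul, coeff_X_pow]
  rw [if_neg (by omega), Finset.sum_eq_single i]
  · simp
  · intro j _ hj
    have hj' := j.2
    have : (j : ℕ) ≠ i := fun h => hj (Fin.ext h)
    rw [if_neg (by omega)]; simp
  · simp

lemma Ppoly_of (n : ℕ) (p : ℝ[X]) (hp : p.Monic) (hd : p.natDegree = n) :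
    Ppoly n (fun i => p.coeff (n - 1 - (i : ℕ))) = p := by
  conv_rhs => rw [hp.as_sum, hd]
  unfold Ppoly
  congr 1
  rw [Fin.sum_univ_eq_sum_range (fun i => C (p.coeff (n - 1 - i)) * X ^ (n - 1 - i)) n,
    Finset.sum_range_reflect (fun i => C (p.coeff i) * X ^ i) n]

lemma Ppoly_cont (n : ℕ) (k : ℕ) : Continuous fun a : Fin n → ℝ => (Ppoly n a).coeff k := by
  unfold Ppoly
  simp only [coeff_add, finset_sum_coeff, coeff_C_mul]
  fun_prop

lemma root_bound (n : ℕ) (hn : 1 ≤ n) (a : Fin n → ℝ) (x : ℝ) (hx : (Ppoly n a).IsRoot x) :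
    |x| ≤ ∑ i, |a i| + 1 := by
  have h1 : x ^ n + ∑ i : Fin n, a i * x ^ (n - 1 - (i : ℕ)) = 0 := by
    have := hx
    simpa [Ppoly, Polynomial.IsRoot, Polynomial.eval_finset_sum] using this
  have hS : 0 ≤ ∑ i, |a i| := Finset.sum_nonneg fun i _ => abs_nonneg _
  by_contra! hc
  have hx1 : 1 ≤ |x| := by linarith
  have h2 : |x| ^ n ≤ (∑ i, |a i|) * |x| ^ (n - 1) := by
    have : x ^ n = - ∑ i : Fin n, a i * x ^ (n - 1 - (i : ℕ)) := by linarith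
    rw [← abs_pow, this, abs_neg, Finset.sum_mul]
    refine (Finset.abs_sum_le_sum_abs _ _).trans (Finset.sum_le_sum fun i _ => ?_)
    rw [abs_mul, abs_pow]
    exact mul_le_mul_of_nonneg_left (pow_le_pow_right₀ hx1 (by omega)) (abs_nonneg _)
  have h3 : |x| ^ n = |x| * |x| ^ (n - 1) := by
    rw [← pow_succ']; congr 1; omega
  rw [h3] at h2
  have := le_of_mul_le_mul_right h2 (by positivity)
  linarith

/-- limits of factorizations -/
lemma limit_dvd {ι : Type*} (J : Multiset ι) : ∀ (N : ℕ) (p : ℕ → ℝ[X]) (p' : ℝ[X])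
    (x : ℕ → ι → ℝ) (y : ι → ℝ), (∀ k, (p k).Monic) → (∀ k, (p k).natDegree = N) →
    p'.natDegree = N →
    (∀ i, Tendsto (fun k => (p k).coeff i) atTop (𝓝 (p'.coeff i))) →
    (∀ j, Tendsto (fun k => x k j) atTop (𝓝 (y j))) →
    (∀ k, ((J.map (x k)).map (fun z => X - C z)).prod ∣ p k) →
    ((J.map y).map (fun z => X - C z)).prod ∣ p' := by
  induction J using Multiset.induction_on with
  | empty => intros; simp
  | cons j J ih =>
    intro N p p' x y hm hd hd' hc hx hdvd
    simp only [Multiset.map_cons, Multiset.prod_cons] at hdvd ⊢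
    have hroot : ∀ k, (X - C (x k j)) * (p k /ₘ (X - C (x k j))) = p k := fun k =>
      mul_divByMonic_eq_iff_isRoot.2 (dvd_iff_isRoot.1 (dvd_of_mul_right_dvd (hdvd k)))
    have hroot0 : p'.IsRoot (y j) := by
      have h1 : Tendsto (fun k => (p k).eval (x k j)) atTop (𝓝 (p'.eval (y j))) := by
        simp only [eval_eq_sum_range, hd, hd']
        exact tendsto_finset_sum _ fun i _ => (hc i).mul ((hx j).pow i)
      have h2 : (fun k => (p k).eval (x k j)) = fun _ => 0 := by
        funext k
        exact dvd_iff_isRoot.1 (dvd_of_mul_right_dvd (hdvd k))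
      rw [h2] at h1
      exact tendsto_nhds_unique h1 tendsto_const_nhds
    rw [← mul_divByMonic_eq_iff_isRoot.2 hroot0]
    apply mul_dvd_mul_left
    refine ih (N - 1) (fun k => p k /ₘ (X - C (x k j))) _ x y ?_ ?_ ?_ ?_ hx ?_
    · intro k
      exact (monic_X_sub_C (x k j)).of_mul_monic_left (by rw [hroot k]; exact hm k)
    · intro k
      rw [natDegree_divByMonic _ (monic_X_sub_C _), hd, natDegree_X_sub_C]
    · rw [natDegree_divByMonic _ (monic_X_sub_C _), hd', natDegree_X_sub_C]
    · intro i
      simp only [coeff_divByMonic_X_sub_C, hd, hd']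
      exact tendsto_finset_sum _ fun l _ => ((hx j).pow _).mul (hc l)
    · intro k
      have := hdvd k
      rw [← hroot k] at this
      exact (mul_dvd_mul_iff_left (X_sub_C_ne_zero _)).1 this

lemma coeff_cont {ι : Type*} (Q : ℝ[X]) (J : Multiset ι) (f : ℝ → ι → ℝ)
    (hf : ∀ j, Continuous fun e => f e j) (k : ℕ) :
    Continuous fun e => (((J.map (f e)).map (fun z => X - C z)).prod * Q).coeff k := by
  induction J using Multiset.induction_on generalizing k with
  | empty => simpa using continuous_const
  | cons j J ih =>
    simp only [Multiset.map_cons, Multiset.prod_cons, mul_assoc]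
    simp only [sub_mul, coeff_sub, coeff_C_mul]
    refine Continuous.sub ?_ ((hf j).mul (ih k))
    rcases k with _ | k
    · simpa using continuous_const
    · simpa only [coeff_X_mul] using ih k

lemma S_map {q : ℕ} (v : Fin q → ℕ) (x : Fin q → ℝ) :
    ∑ j, v j • ({x j} : Multiset ℝ) = (∑ j, v j • ({j} : Multiset (Fin q))).map x := by
  rw [← Multiset.coe_mapAddMonoidHom, map_sum]
  simp [map_nsmul]

/-- Let `S_{v₁}`, `S_{v₂}` be nonempty strata with `l(v₁) = l(v₂)`. Then `S_{v₁}`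
is contained in the closure of `S_{v₂}` iff `v₁` is obtained from `v₂` by an
operation of type A. -/
theorem adjacency_same_length (n : ℕ) (hn : 1 ≤ n) (v₁ v₂ : List ℕ)
    (hv₁ : ∀ m ∈ v₁, 0 < m) (hv₂ : ∀ m ∈ v₂, 0 < m)
    (hne₁ : (Stratum n v₁).Nonempty) (hne₂ : (Stratum n v₂).Nonempty)
    (hlen : v₁.sum = v₂.sum) :
    Stratum n v₁ ⊆ closure (Stratum n v₂) ↔ OpA v₂ v₁ := by
  have hcard : ∀ v : List ℕ, ∀ x : Fin v.length → ℝ,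
      (∑ j, v.get j • ({x j} : Multiset ℝ)).card = v.sum := by
    intro v x
    rw [Multiset.card_sum]
    simp
  constructor
  · intro hsub
    obtain ⟨a, ha⟩ := hne₁
    obtain ⟨u, hu, hlim⟩ := mem_closure_iff_seq_limit.1 (hsub ha)
    have ha' : MVm (Ppoly n a).roots = v₁ := by rw [← MV_eq]; exact ha
    have hu' : ∀ k, MVm (Ppoly n (u k)).roots = v₂ := fun k => by rw [← MV_eq]; exact hu k
    have hx : ∀ k, ∃ x : Fin v₂.length → ℝ, Monotone x ∧
        (Ppoly n (u k)).roots = ∑ j, v₂.get j • ({x j} : Multiset ℝ) := fun k =>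
      mono_of_OpA v₂ hv₂ _ (by rw [hu' k]; exact OpA_refl _)
    choose x hxm hxr using hx
    have hbd : Bornology.IsBounded (Set.range x) := by
      obtain ⟨M, hM⟩ := (((continuous_finset_sum Finset.univ
        fun (i : Fin n) _ => (continuous_apply i).abs).tendsto a).comp hlim).bddAbove_range
      refine isBounded_iff_forall_norm_le.2 ⟨|M| + 1, ?_⟩
      rintro _ ⟨k, rfl⟩
      rw [pi_norm_le_iff_of_nonneg (by positivity)]
      intro j
      have h1 : x k j ∈ (Ppoly n (u k)).roots := by
        rw [hxr k]; exact S_mem _ (fun j => hv₂ _ (List.get_mem _ _)) _ j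
      have h2 := root_bound n hn (u k) _ (isRoot_of_mem_roots h1)
      have h3 : ∑ i, |u k i| ≤ M := hM ⟨k, rfl⟩
      rw [Real.norm_eq_abs]
      linarith [le_abs_self M]
    obtain ⟨y, -, φ, hφ, hy⟩ := tendsto_subseq_of_bounded hbd (fun k => Set.mem_range_self k)
    have hy' := fun j => (tendsto_pi_nhds.1 hy) j
    have hym : Monotone y := fun i j hij =>
      le_of_tendsto_of_tendsto' (hy' i) (hy' j) fun k => hxm _ hij
    have hd := limit_dvd (∑ j, v₂.get j • ({j} : Multiset (Fin v₂.length))) n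
      (fun k => Ppoly n (u (φ k))) (Ppoly n a) (fun k => x (φ k)) y
      (fun k => Ppoly_monic n hn _) (fun k => Ppoly_natDegree n hn _) (Ppoly_natDegree n hn _)
      (fun i => (((Ppoly_cont n i).tendsto a).comp hlim).comp hφ.tendsto_atTop) hy'
      (fun k => by
        rw [← S_map, ← hxr]
        exact prod_multiset_X_sub_C_dvd _)
    rw [← S_map, Multiset.prod_X_sub_C_dvd_iff_le_roots (Ppoly_monic n hn a).ne_zero] at hd
    obtain ⟨x₁, -, hx₁⟩ := mono_of_OpA v₁ hv₁ (Ppoly n a).roots (by rw [ha']; exact OpA_refl _)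
    have heq := Multiset.eq_of_le_of_card_le hd (by rw [hx₁, hcard, hcard, hlen])
    rw [← ha', ← heq]
    exact OpA_of_mono v₂ hv₂ y hym
  · intro hA a ha
    have ha' : MVm (Ppoly n a).roots = v₁ := by rw [← MV_eq]; exact ha
    obtain ⟨y, hy, hyr⟩ := mono_of_OpA v₂ hv₂ (Ppoly n a).roots (by rw [ha']; exact hA)
    obtain ⟨Q, hQ, hQd, hQr⟩ := exists_prod_multiset_X_sub_C_mul (Ppoly n a)
    set J := ∑ j, v₂.get j • ({j} : Multiset (Fin v₂.length)) with hJ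
    let f : ℝ → Fin v₂.length → ℝ := fun e j => y j + e * (j : ℕ)
    let p : ℝ → ℝ[X] := fun e => ((J.map (f e)).map (fun z => X - C z)).prod * Q
    have hp0 : p 0 = Ppoly n a := by
      simp only [p, f, zero_mul, add_zero]
      rw [← hQ, hyr, S_map]
    have hmon : ∀ e, (((J.map (f e)).map (fun z => X - C z)).prod).Monic := fun e =>
      monic_multisetProd_X_sub_C _
    have hQm : Q.Monic := (hmon 0).of_mul_monic_left (by
      have := Ppoly_monic n hn a
      rw [← hp0] at this; exact this)
    have hpm : ∀ e, (p e).Monic := fun e => (hmon e).mul hQm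
    have hpd : ∀ e, (p e).natDegree = n := by
      have h : ∀ e, (p e).natDegree = J.card + Q.natDegree := fun e => by
        rw [(hmon e).natDegree_mul hQm, natDegree_multiset_prod_X_sub_C_eq_card, Multiset.card_map]
      intro e
      rw [h e, ← h 0, hp0, Ppoly_natDegree n hn]
    have hroots : ∀ e, (p e).roots = J.map (f e) := fun e => by
      rw [roots_mul (hpm e).ne_zero, hQr, add_zero, roots_multiset_prod_X_sub_C]
    let b : ℝ → Fin n → ℝ := fun e i => (p e).coeff (n - 1 - (i : ℕ))
    have hPb : ∀ e, Ppoly n (b e) = p e := fun e => Ppoly_of n (p e) (hpm e) (hpd e)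
    have hb0 : b 0 = a := by
      funext i
      simp only [b, hp0, Ppoly_coeff]
    have hbc : Continuous b := continuous_pi fun i =>
      coeff_cont Q J f (fun j => by fun_prop) _
    have hbt : Tendsto b (𝓝[>] 0) (𝓝 a) := by
      rw [← hb0]; exact (hbc.tendsto 0).mono_left nhdsWithin_le_nhds
    refine mem_closure_of_tendsto hbt ?_
    filter_upwards [self_mem_nhdsWithin] with e he
    have he : 0 < e := he
    change MV n (b e) = v₂
    rw [MV_eq, hPb, hroots, hJ, ← S_map]
    refine MVm_strict v₂ hv₂ _ fun i j hij => ?_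
    have h1 := hy hij.le
    have h2 : ((i : ℕ) : ℝ) < (j : ℕ) := by exact_mod_cast hij
    have h3 := mul_lt_mul_of_pos_left h2 he
    simp only [f]
    linarith
end

section
/- Let N ≥ 2, let x_1,…,x_N and m_1,…,m_N be real numbers, and let M be the N×N matrix with entries M_{j,i} = j · m_i · x_i^{j−1}. Denote by A_{u,i} = (−1)^{u+i} times the (u,i) minor of M its (u,i) cofactor. If μ ≠ ν and x_μ = x_ν, then for every u with 1 ≤ u ≤ N one has m_μ · A_{u,μ} + m_ν · A_{u,ν} = 0, and, provided m_μ and m_ν are nonzero, A_{u,i} = 0 for all i ∉ {μ, ν}. -/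
/-- The `(u,i)` cofactor of an `N × N` matrix (`N = N' + 2`): `(−1)^{u+i}` times
the determinant of the matrix obtained by deleting row `u` and column `i`. -/
noncomputable def cofactor {N' : ℕ} (M : Matrix (Fin (N' + 2)) (Fin (N' + 2)) ℝ)
    (u i : Fin (N' + 2)) : ℝ :=
  (-1 : ℝ) ^ ((u : ℕ) + (i : ℕ)) * (M.submatrix u.succAbove i.succAbove).det

theorem det_zero_of_prop_cols {n : ℕ} (P : Matrix (Fin n) (Fin n) ℝ) (c : Fin n → ℝ) (a b : ℝ)
    (μ ν : Fin n) (h : μ ≠ ν) (h1 : ∀ j, P j μ = a * c j) (h2 : ∀ j, P j ν = b * c j) :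
    P.det = 0 := by
  have e : P = (Matrix.of fun j k => if k = μ ∨ k = ν then c j else P j k) *
      Matrix.diagonal (fun k => if k = μ then a else if k = ν then b else 1) := by
    ext j k
    rw [Matrix.mul_diagonal]
    by_cases k1 : k = μ
    · subst k1; simp [h1, mul_comm]
    · by_cases k2 : k = ν
      · subst k2; simp [h2, k1, mul_comm]
      · simp [k1, k2]
  rw [e, Matrix.det_mul, Matrix.det_zero_of_column_eq h (by intro j; simp), zero_mul]

theorem cofactor_eq_det {N' : ℕ} (M : Matrix (Fin (N' + 2)) (Fin (N' + 2)) ℝ)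
    (u i : Fin (N' + 2)) : cofactor M u i = (M.updateRow u (Pi.single i 1)).det := by
  rw [← Matrix.adjugate_apply, Matrix.adjugate_fin_succ_eq_det_submatrix]
  rfl

/-- Let `N = N' + 2 ≥ 2` and let `M` be the `N × N` matrix with entries
`M_{j,i} = j · m_i · x_i^{j−1}` (indices `0`-based, so row `j : Fin N` is row
`j+1`), with cofactors `A_{u,i}`.  If `μ ≠ ν` and `x_μ = x_ν`, then for every
`u` one has `m_μ · A_{u,μ} + m_ν · A_{u,ν} = 0`, and, provided `m_μ, m_ν` are
nonzero, `A_{u,i} = 0` for every `i ∉ {μ, ν}` (two proportional columns remain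
in the minor). -/
theorem cofactor_relations (N' : ℕ) (x m : Fin (N' + 2) → ℝ)
    (M : Matrix (Fin (N' + 2)) (Fin (N' + 2)) ℝ)
    (hM : ∀ j i, M j i = ((j : ℕ) + 1) * m i * x i ^ (j : ℕ))
    (μ ν : Fin (N' + 2)) (hμν : μ ≠ ν) (hx : x μ = x ν) :
    ∀ u : Fin (N' + 2),
      m μ * cofactor M u μ + m ν * cofactor M u ν = 0 ∧
      (m μ ≠ 0 → m ν ≠ 0 → ∀ i, i ≠ μ → i ≠ ν → cofactor M u i = 0) := by
  intro u
  constructor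
  · rw [cofactor_eq_det, cofactor_eq_det, ← Matrix.det_updateRow_smul,
      ← Matrix.det_updateRow_smul, ← Matrix.det_updateRow_add]
    refine det_zero_of_prop_cols _
      (fun j => if j = u then 1 else ((j : ℕ) + 1) * x μ ^ (j : ℕ)) (m μ) (m ν) μ ν hμν ?_ ?_
    · intro j
      by_cases hj : j = u
      · subst hj; simp [hμν]
      · simp [hj, hM]; ring
    · intro j
      by_cases hj : j = u
      · subst hj; simp [hμν.symm]
      · simp [hj, hM, hx]; ring
  · intro _ _ i h1 h2
    rw [cofactor_eq_det]
    refine det_zero_of_prop_cols _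
      (fun j => if j = u then 0 else ((j : ℕ) + 1) * x μ ^ (j : ℕ)) (m μ) (m ν) μ ν hμν ?_ ?_
    · intro j
      by_cases hj : j = u
      · subst hj; simp [h1.symm]
      · simp [hj, hM]; ring
    · intro j
      by_cases hj : j = u
      · subst hj; simp [h2.symm]
      · simp [hj, hM, hx]; ring
end
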